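/- (Iteration complexity for ε-stationarity.) In the setting and under the hypotheses of the main convergence theorem (η = 1/(θL), θ > 2, θ(θ−1) ≥ 2m(m+1)α(n,b)), for any ε > 0, if the total number of inner iterations satisfies mS ≥ ( f′(W^{0,0}) − f* ) / ( η (1/2 − ηL) ε ), then the output W_final chosen uniformly at random from {W^{s,t}}_{0≤s<S, 0≤t<m} is an ε-stationary point in expectation, i.e., E[ ‖Γ_{f′,η}(W_final)‖² ] ≤ ε. -/

import Mathlib

open scoped RealInnerProductSpace ENNReal

noncomputable section

/-- `ℝ^{d×k}` with the Frobenius (Euclidean) norm, viewed as a Euclidean space. -/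
abbrev Mat (d k : ℕ) := EuclideanSpace ℝ (Fin d × Fin k)

/-- Convexity for functions with values in `[0,∞]`. -/
def ConvexFnENN {E : Type*} [AddCommMonoid E] [Module ℝ E] (γ : E → ℝ≥0∞) : Prop :=
  ∀ x y : E, ∀ a b : ℝ, 0 ≤ a → 0 ≤ b → a + b = 1 →
    γ (a • x + b • y) ≤ ENNReal.ofReal a * γ x + ENNReal.ofReal b * γ y

/-- `p = prox_{ηγ}(x)`, i.e. `p` minimizes `u ↦ ηγ(u) + (1/2)‖u − x‖²`. -/
def IsProxPt {E : Type*} [NormedAddCommGroup E] (γ : E → ℝ≥0∞) (η : ℝ) (x p : E) : Prop :=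
  ∀ u : E, ENNReal.ofReal η * γ p + ENNReal.ofReal (‖p - x‖ ^ 2 / 2)
      ≤ ENNReal.ofReal η * γ u + ENNReal.ofReal (‖u - x‖ ^ 2 / 2)

/-- `g = (1/n) ∑ᵢ gᵢ`. -/
def avgFn {n : ℕ} {E : Type*} (g : Fin n → E → ℝ) (x : E) : ℝ := (1 / n : ℝ) * ∑ i, g i x

/-- The gradient mapping `Γ_{f′,η}(x) = (1/η)(x − prox_{ηψ′}(x − η ∇g(x)))`, expressed via a
given proximal map `prox` (of `ηψ′`) and gradient map `gr = ∇g`. -/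
def gradMapping {E : Type*} [NormedAddCommGroup E] [Module ℝ E]
    (prox : E → E) (gr : E → E) (η : ℝ) (x : E) : E :=
  (1 / η) • (x - prox (x - η • gr x))

/-- The sample space for the batches: one uniformly random size-`b` subset of `{1,…,n}` for
each inner iteration `(s,t)`; the uniform distribution on this product space makes the
batches independent and uniform. -/
abbrev BatchSpace (n S m b : ℕ) := (Fin S × Fin m) → {A : Finset (Fin n) // A.card = b}

/-! Convexity makes the proximal objective grow quadratically away from its minimiser, and `g`
differs from its linearisation at a point by at most `L/2` times the squared distance. Comparing a
step along an estimate `V` with the exact proximal gradient step therefore shows that the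
objective decreases by `η (1/2 - ηL) ‖Γ‖² + (1/(2η) - L/2) ‖W^{s,t+1} - W^{s,t}‖²`, up to the
error `η/2 ‖V - ∇g‖²`. Sampling without replacement bounds the expectation of `‖V - ∇g‖²` by
`α(n,b) L² 𝔼‖W^{s,t} - W^{s,0}‖²`, since the iterates up to `W^{s,t}` do not depend on the batch
`B_{s,t}`. By Cauchy-Schwarz, `∑_t ‖W^{s,t} - W^{s,0}‖²` over an epoch is at most `m(m-1)/2` times
the sum of the squared step lengths, so the decrease absorbs the error. Telescoping what remains
over all inner iterations gives the bound.
-/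

section

open scoped BigOperators Gradient Topology

section Smooth

open Set

variable {E : Type*} [NormedAddCommGroup E] [InnerProductSpace ℝ E] [CompleteSpace E]
  {f : E → ℝ} {L : ℝ}

theorem abs_sub_sub_inner_gradient_le (hf : Differentiable ℝ f)
    (hL : ∀ x y, ‖∇ f x - ∇ f y‖ ≤ L * ‖x - y‖) (x y : E) :
    |f y - f x - ⟪∇ f x, y - x⟫| ≤ L / 2 * ‖y - x‖ ^ 2 := by
  set d := y - x with hd
  let φ : ℝ → ℝ := fun t ↦ f (x + t • d) - f x - t * ⟪∇ f x, d⟫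
  have hφ (t : ℝ) : HasDerivAt φ ⟪∇ f (x + t • d) - ∇ f x, d⟫ t := by
    have hline : HasDerivAt (fun t : ℝ ↦ x + t • d) d t := by
      simpa using ((hasDerivAt_id t).smul_const d).const_add x
    have hcomp := (hf (x + t • d)).hasGradientAt.hasFDerivAt.comp_hasDerivAt t hline
    have hlin : HasDerivAt (fun t : ℝ ↦ t * ⟪∇ f x, d⟫) ⟪∇ f x, d⟫ t := by
      simpa using (hasDerivAt_id t).mul_const ⟪∇ f x, d⟫
    exact ((hcomp.sub_const (f x)).sub hlin).congr_deriv (by simp [inner_sub_left])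
  have hbound (t : ℝ) (ht : t ∈ Ico 0 1) : ‖⟪∇ f (x + t • d) - ∇ f x, d⟫‖ ≤ L * ‖d‖ ^ 2 * t :=
    calc ‖⟪∇ f (x + t • d) - ∇ f x, d⟫‖ ≤ ‖∇ f (x + t • d) - ∇ f x‖ * ‖d‖ := norm_inner_le_norm _ _
      _ ≤ L * ‖x + t • d - x‖ * ‖d‖ := by gcongr; exact hL _ _
      _ = L * ‖d‖ ^ 2 * t := by
        rw [add_sub_cancel_left, norm_smul, Real.norm_of_nonneg ht.1]; ring
  have hquad (t : ℝ) : HasDerivAt (fun t ↦ L / 2 * ‖d‖ ^ 2 * t ^ 2) (L * ‖d‖ ^ 2 * t) t :=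
    (((hasDerivAt_id t).pow 2).const_mul (L / 2 * ‖d‖ ^ 2)).congr_deriv (by simp; ring)
  have h := image_norm_le_of_norm_deriv_right_le_deriv_boundary
    (fun t _ ↦ (hφ t).continuousAt.continuousWithinAt) (fun t _ ↦ (hφ t).hasDerivWithinAt)
    (by simp [φ]) hquad hbound (right_mem_Icc.2 zero_le_one)
  simpa [φ, hd] using h

end Smooth

section Prox

variable {E : Type*} [NormedAddCommGroup E] {γ : E → ℝ≥0∞} {η : ℝ} {x p u : E}

theorem IsProxPt.ne_top (hη : 0 < η) (hp : IsProxPt γ η x p) (hu : γ u ≠ ⊤) : γ p ≠ ⊤ := by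
  intro hpt
  have h := hp u
  rw [hpt, ENNReal.mul_top (by simpa using hη), top_add, top_le_iff] at h
  exact ENNReal.add_ne_top.2
    ⟨ENNReal.mul_ne_top ENNReal.ofReal_ne_top hu, ENNReal.ofReal_ne_top⟩ h

theorem IsProxPt.toReal_le (hη : 0 < η) (hp : IsProxPt γ η x p) (hu : γ u ≠ ⊤) :
    η * (γ p).toReal + ‖p - x‖ ^ 2 / 2 ≤ η * (γ u).toReal + ‖u - x‖ ^ 2 / 2 := by
  have htoReal {w : E} (hw : γ w ≠ ⊤) :
      (ENNReal.ofReal η * γ w + ENNReal.ofReal (‖w - x‖ ^ 2 / 2)).toReal =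
        η * (γ w).toReal + ‖w - x‖ ^ 2 / 2 := by
    rw [ENNReal.toReal_add (ENNReal.mul_ne_top ENNReal.ofReal_ne_top hw) ENNReal.ofReal_ne_top,
      ENNReal.toReal_mul, ENNReal.toReal_ofReal hη.le, ENNReal.toReal_ofReal (by positivity)]
  rw [← htoReal (hp.ne_top hη hu), ← htoReal hu]
  exact ENNReal.toReal_mono (ENNReal.add_ne_top.2
    ⟨ENNReal.mul_ne_top ENNReal.ofReal_ne_top hu, ENNReal.ofReal_ne_top⟩) (hp u)

theorem ConvexFnENN.convexOn_toReal {E : Type*} [AddCommMonoid E] [Module ℝ E] {γ : E → ℝ≥0∞}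
    (hγ : ConvexFnENN γ) : ConvexOn ℝ {x | γ x ≠ ⊤} fun x ↦ (γ x).toReal := by
  have hfin {x y : E} (hx : γ x ≠ ⊤) (hy : γ y ≠ ⊤) (a b : ℝ) :
      ENNReal.ofReal a * γ x + ENNReal.ofReal b * γ y ≠ ⊤ :=
    ENNReal.add_ne_top.2 ⟨ENNReal.mul_ne_top ENNReal.ofReal_ne_top hx,
      ENNReal.mul_ne_top ENNReal.ofReal_ne_top hy⟩
  refine ⟨fun x hx y hy a b ha hb hab ↦ ne_top_of_le_ne_top (hfin hx hy a b) (hγ x y a b ha hb hab),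
    fun x hx y hy a b ha hb hab ↦ ?_⟩
  have h := ENNReal.toReal_mono (hfin hx hy a b) (hγ x y a b ha hb hab)
  rwa [ENNReal.toReal_add (ENNReal.mul_ne_top ENNReal.ofReal_ne_top hx)
    (ENNReal.mul_ne_top ENNReal.ofReal_ne_top hy), ENNReal.toReal_mul, ENNReal.toReal_mul,
    ENNReal.toReal_ofReal ha, ENNReal.toReal_ofReal hb] at h

variable [InnerProductSpace ℝ E]

theorem norm_sq_convex_combination (x y : E) (t : ℝ) :
    ‖(1 - t) • x + t • y‖ ^ 2 = (1 - t) * ‖x‖ ^ 2 + t * ‖y‖ ^ 2 - t * (1 - t) * ‖y - x‖ ^ 2 := by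
  simp only [← real_inner_self_eq_norm_sq, inner_add_left, inner_add_right, inner_sub_left,
    inner_sub_right, real_inner_smul_left, real_inner_smul_right, real_inner_comm x y]
  ring

-- Compare `p` with `(1 - t) • p + t • u`, divide by `t`, and let `t → 0⁺`.
theorem IsProxPt.toReal_add_norm_sub_sq_le (hγ : ConvexFnENN γ) (hη : 0 < η)
    (hp : IsProxPt γ η x p) (hu : γ u ≠ ⊤) :
    η * (γ p).toReal + ‖p - x‖ ^ 2 / 2 + ‖u - p‖ ^ 2 / 2 ≤
      η * (γ u).toReal + ‖u - x‖ ^ 2 / 2 := by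
  have hsegment (t : ℝ) (ht : t ∈ Set.Ioo (0 : ℝ) 1) :
      η * (γ p).toReal + ‖p - x‖ ^ 2 / 2 + (1 - t) * (‖u - p‖ ^ 2 / 2) ≤
        η * (γ u).toReal + ‖u - x‖ ^ 2 / 2 := by
    have hpt : γ p ≠ ⊤ := hp.ne_top hη hu
    have ht' : 0 ≤ 1 - t := sub_nonneg.2 ht.2.le
    have hmin := hp.toReal_le hη (hγ.convexOn_toReal.1 hpt hu ht' ht.1.le (by ring))
    have hconv := hγ.convexOn_toReal.2 hpt hu ht' ht.1.le (by ring)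
    have hnorm := norm_sq_convex_combination (p - x) (u - x) t
    rw [show (1 - t) • (p - x) + t • (u - x) = (1 - t) • p + t • u - x by module,
      sub_sub_sub_cancel_right] at hnorm
    rw [hnorm] at hmin
    refine le_of_mul_le_mul_left ?_ ht.1
    linear_combination hmin + η * hconv
  have hlim : Filter.Tendsto
      (fun t : ℝ ↦ η * (γ p).toReal + ‖p - x‖ ^ 2 / 2 + (1 - t) * (‖u - p‖ ^ 2 / 2)) (𝓝[>] 0)
      (𝓝 (η * (γ p).toReal + ‖p - x‖ ^ 2 / 2 + (1 - 0) * (‖u - p‖ ^ 2 / 2))) :=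
    (Continuous.tendsto (by fun_prop) 0).mono_left nhdsWithin_le_nhds
  rw [sub_zero, one_mul] at hlim
  exact le_of_tendsto hlim (Filter.eventually_of_mem (Ioo_mem_nhdsGT one_pos) hsegment)

end Prox

section Step

variable {E : Type*} [NormedAddCommGroup E] [InnerProductSpace ℝ E] [CompleteSpace E]
  {f : E → ℝ} {γ : E → ℝ≥0∞} {L η : ℝ}

/-- The composite objective `f + γ`, with values in `ℝ`: it agrees with the extended-valued sum
only where `γ` is finite, since `∞.toReal = 0`. -/
def objective {E : Type*} (f : E → ℝ) (γ : E → ℝ≥0∞) (x : E) : ℝ := f x + (γ x).toReal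

theorem le_objective_of_coe_le {E : Type*} {f : E → ℝ} {γ : E → ℝ≥0∞} {c : ℝ} {x : E}
    (hx : γ x ≠ ⊤) (hc : (c : EReal) ≤ (f x : EReal) + (γ x : EReal)) : c ≤ objective f γ x := by
  rw [← EReal.coe_ennreal_toReal hx] at hc
  exact_mod_cast hc

theorem IsProxPt.objective_le (hf : Differentiable ℝ f)
    (hL : ∀ x y, ‖∇ f x - ∇ f y‖ ≤ L * ‖x - y‖) (hγ : ConvexFnENN γ) (hη : 0 < η)
    {x v y z : E} (hy : IsProxPt γ η (x - η • v) y) (hz : γ z ≠ ⊤) :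
    η * objective f γ y ≤ η * objective f γ z + η * ⟪∇ f x - v, y - z⟫
      - (1 / 2 - η * L / 2) * ‖y - x‖ ^ 2 + (1 / 2 + η * L / 2) * ‖z - x‖ ^ 2
      - 1 / 2 * ‖y - z‖ ^ 2 := by
  have hprox := hy.toReal_add_norm_sub_sq_le hγ hη hz
  have hupper := (abs_le.1 (abs_sub_sub_inner_gradient_le hf hL x y)).2
  have hlower := (abs_le.1 (abs_sub_sub_inner_gradient_le hf hL x z)).1
  have hshift (w : E) :
      ‖w - (x - η • v)‖ ^ 2 = ‖w - x‖ ^ 2 + 2 * (η * ⟪v, w - x⟫) + ‖η • v‖ ^ 2 := by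
    rw [← sub_add, norm_add_sq_real, real_inner_smul_right, real_inner_comm]
  have hinner : ⟪∇ f x - v, y - z⟫ =
      ⟪∇ f x, y - x⟫ - ⟪∇ f x, z - x⟫ - (⟪v, y - x⟫ - ⟪v, z - x⟫) := by
    rw [← inner_sub_right, ← inner_sub_right, ← inner_sub_left, sub_sub_sub_cancel_right]
  rw [hshift, hshift, norm_sub_rev z y] at hprox
  rw [hinner, objective, objective]
  linear_combination hprox + η * hupper + η * hlower

theorem inner_le_half_norm_sq_add {E : Type*} [NormedAddCommGroup E] [InnerProductSpace ℝ E]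
    (x y : E) : ⟪x, y⟫ ≤ 1 / 2 * ‖x‖ ^ 2 + 1 / 2 * ‖y‖ ^ 2 := by
  linarith [norm_sub_sq_real x y, sq_nonneg ‖x - y‖]

theorem norm_prox_sub_sq_eq {E : Type*} [NormedAddCommGroup E] [NormedSpace ℝ E] (hη : η ≠ 0)
    (prox G : E → E) (x : E) :
    ‖prox (x - η • G x) - x‖ ^ 2 = η ^ 2 * ‖gradMapping prox G η x‖ ^ 2 := by
  rw [gradMapping, norm_smul, mul_pow, norm_sub_rev x, Real.norm_eq_abs, sq_abs]
  field_simp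

-- The exact prox-gradient point `z` is compared both with `x`, where it produces the gradient
-- mapping, and with `y`, where it produces the error `v - ∇ f x`.
theorem objective_prox_step_le (hf : Differentiable ℝ f)
    (hL : ∀ x y, ‖∇ f x - ∇ f y‖ ≤ L * ‖x - y‖) (hγ : ConvexFnENN γ) (hη : 0 < η)
    {prox : E → E} (hprox : ∀ x, IsProxPt γ η x (prox x)) {x : E} (hx : γ x ≠ ⊤) (v : E) :
    objective f γ (prox (x - η • v)) ≤
      objective f γ x - η * (1 / 2 - η * L) * ‖gradMapping prox (∇ f) η x‖ ^ 2
        - (1 / (2 * η) - L / 2) * ‖prox (x - η • v) - x‖ ^ 2 + η / 2 * ‖v - ∇ f x‖ ^ 2 := by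
  set y := prox (x - η • v)
  set z := prox (x - η • ∇ f x) with hz
  have hzx := (hprox (x - η • ∇ f x)).objective_le hf hL hγ hη hx
  have hyz := (hprox (x - η • v)).objective_le hf hL hγ hη ((hprox (x - η • ∇ f x)).ne_top hη hx)
  have hyoung := inner_le_half_norm_sq_add (η • (∇ f x - v)) (y - z)
  have hmap := norm_prox_sub_sq_eq hη.ne' prox (∇ f) x
  rw [real_inner_smul_left, norm_smul, mul_pow, Real.norm_eq_abs, sq_abs,
    norm_sub_rev (∇ f x)] at hyoung
  simp only [sub_self, inner_zero_left, norm_zero] at hzx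
  rw [← hz] at hzx hyz hmap
  rw [hmap] at hzx hyz
  refine le_of_mul_le_mul_left ?_ hη
  have hcancel : η * (1 / (2 * η) - L / 2) = 1 / 2 - η * L / 2 := by field_simp
  linear_combination hzx + hyz + hyoung + hcancel * ‖y - x‖ ^ 2

end Step

section Resampling

variable {ι M : Type*} [Fintype ι] [DecidableEq ι] {π : ι → Type*} [∀ i, Fintype (π i)]
  [AddCommMonoid M] [Module ℚ≥0 M]

-- Swapping `ω i` with an independent copy `a` preserves the uniform distribution of `(ω, a)`.
theorem expect_apply_eq_expect_expect (i : ι) (H : (∀ i, π i) → π i → M)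
    (hH : ∀ ω a, H (Function.update ω i a) = H ω) :
    𝔼 ω, H ω (ω i) = 𝔼 ω, 𝔼 a, H ω a := by
  let swap : (∀ i, π i) × π i → (∀ i, π i) × π i := fun p ↦ (Function.update p.1 i p.2, p.1 i)
  have hswap : Function.Involutive swap := fun p ↦ by simp [swap]
  calc 𝔼 ω, H ω (ω i) = 𝔼 ω, 𝔼 _a : π i, H ω (ω i) :=
        Finset.expect_congr rfl fun ω _ ↦ (Finset.expect_const ⟨ω i, Finset.mem_univ _⟩ _).symm
    _ = 𝔼 p : (∀ i, π i) × π i, H p.1 (p.1 i) :=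
        (Finset.expect_product' _ _ fun ω _ ↦ H ω (ω i)).symm
    _ = 𝔼 p : (∀ i, π i) × π i, H p.1 p.2 :=
        Fintype.expect_bijective swap hswap.bijective _ _ fun p ↦ by simp only [swap, hH]
    _ = 𝔼 ω, 𝔼 a, H ω a := Finset.expect_product' _ _ H

end Resampling

section Sampling

variable {ι : Type*} [Fintype ι] {b : ℕ}

theorem nonempty_subtype_card_eq (hb : b ≤ Fintype.card ι) :
    Nonempty {A : Finset ι // A.card = b} :=
  let ⟨A, hA⟩ := Finset.exists_subset_card_eq (s := Finset.univ) hb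
  ⟨A, hA.2⟩

section JointInclusion

variable [DecidableEq ι]

/-- The probability that a uniformly random `b`-element subset of `ι` contains both `i` and `j`. -/
def jointInclusionProb (b : ℕ) (i j : ι) : ℝ :=
  𝔼 A : {A : Finset ι // A.card = b}, if i ∈ A.1 ∧ j ∈ A.1 then 1 else 0

theorem jointInclusionProb_perm (σ : Equiv.Perm ι) (i j : ι) :
    jointInclusionProb b (σ i) (σ j) = jointInclusionProb b i j :=
  (Fintype.expect_equiv (σ.finsetCongr.subtypeEquiv fun A ↦ by simp) _ _ fun A ↦ by simp).symm

theorem sum_jointInclusionProb_right (i : ι) :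
    ∑ j, jointInclusionProb b i j = b * jointInclusionProb b i i := by
  simp only [jointInclusionProb, Finset.mul_expect]
  rw [← Finset.expect_sum_comm]
  refine Finset.expect_congr rfl fun A _ ↦ ?_
  by_cases hi : i ∈ A.1 <;> simp [hi, A.2]

theorem jointInclusionProb_self (hb : b ≤ Fintype.card ι) (i : ι) :
    jointInclusionProb b i i = b / Fintype.card ι := by
  have := nonempty_subtype_card_eq hb
  have hsum : ∑ j : ι, jointInclusionProb b j j = b := by
    simp only [jointInclusionProb, and_self]
    rw [← Finset.expect_sum_comm]
    exact (Finset.expect_congr rfl fun A _ ↦ by simp [A.2]).trans (Fintype.expect_const _)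
  have hconst (j : ι) : jointInclusionProb b j j = jointInclusionProb b i i := by
    simpa using jointInclusionProb_perm (b := b) (Equiv.swap i j) i i
  have hcard : (Fintype.card ι : ℝ) ≠ 0 := by
    exact_mod_cast (Fintype.card_pos_iff.2 ⟨i⟩).ne'
  rw [eq_div_iff hcard, ← hsum]
  simp [hconst, mul_comm]

theorem jointInclusionProb_of_ne (hb : b ≤ Fintype.card ι) {i j : ι} (hij : j ≠ i) :
    jointInclusionProb b i j =
      b * (b - 1) / (Fintype.card ι * (Fintype.card ι - 1)) := by
  have hcard : (2 : ℝ) ≤ Fintype.card ι := by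
    exact_mod_cast Fintype.one_lt_card_iff.2 ⟨j, i, hij⟩
  have hconst (k : ι) (hk : k ∈ Finset.univ.erase i) :
      jointInclusionProb b i k = jointInclusionProb b i j := by
    have h := jointInclusionProb_perm (b := b) (Equiv.swap j k) i j
    rwa [Equiv.swap_apply_left,
      Equiv.swap_apply_of_ne_of_ne hij.symm (Finset.ne_of_mem_erase hk).symm] at h
  have hrow := sum_jointInclusionProb_right (b := b) i
  rw [← Finset.add_sum_erase _ _ (Finset.mem_univ i), Finset.sum_congr rfl hconst,
    Finset.sum_const, Finset.card_erase_of_mem (Finset.mem_univ i), Finset.card_univ,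
    nsmul_eq_mul, Nat.cast_pred (by exact_mod_cast (by linarith : (0 : ℝ) < Fintype.card ι)),
    jointInclusionProb_self hb] at hrow
  have hcard' : (Fintype.card ι : ℝ) - 1 ≠ 0 := by linarith
  field_simp at hrow ⊢
  linear_combination hrow

end JointInclusion

variable {E : Type*} [NormedAddCommGroup E] [InnerProductSpace ℝ E]

theorem expect_norm_sq_sum_eq_sum_jointInclusionProb [DecidableEq ι] (b : ℕ) (ξ : ι → E) :
    𝔼 A : {A : Finset ι // A.card = b}, ‖∑ j ∈ A.1, ξ j‖ ^ 2 =
      ∑ i, ∑ j, jointInclusionProb b i j * ⟪ξ i, ξ j⟫ := by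
  have hexpand (A : Finset ι) : ‖∑ j ∈ A, ξ j‖ ^ 2 =
      ∑ i, ∑ j, (if i ∈ A ∧ j ∈ A then 1 else 0) * ⟪ξ i, ξ j⟫ := by
    rw [← real_inner_self_eq_norm_sq, sum_inner]
    simp [ite_and, inner_sum, Finset.sum_ite_mem]
  simp only [hexpand, jointInclusionProb, Finset.expect_mul, Finset.expect_sum_comm]

theorem expect_norm_sq_sum_eq_of_sum_eq_zero (hι : 2 ≤ Fintype.card ι) (hb : b ≤ Fintype.card ι)
    {ξ : ι → E} (hξ : ∑ i, ξ i = 0) :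
    𝔼 A : {A : Finset ι // A.card = b}, ‖∑ j ∈ A.1, ξ j‖ ^ 2 =
      b * (Fintype.card ι - b) / (Fintype.card ι * (Fintype.card ι - 1)) * ∑ i, ‖ξ i‖ ^ 2 := by
  classical
  have hcard : (2 : ℝ) ≤ Fintype.card ι := by exact_mod_cast hι
  have hcard' : (Fintype.card ι : ℝ) - 1 ≠ 0 := by linarith
  set N := (Fintype.card ι : ℝ)
  have hprob (i j : ι) : jointInclusionProb b i j =
      b * (b - 1) / (N * (N - 1)) + if i = j then b * (N - b) / (N * (N - 1)) else 0 := by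
    split_ifs with hij
    · rw [hij, jointInclusionProb_self hb]
      field_simp
      ring
    · rw [jointInclusionProb_of_ne hb (Ne.symm hij), add_zero]
  have hcross : ∑ i, ∑ j, ⟪ξ i, ξ j⟫ = 0 := by
    simp only [← inner_sum, ← sum_inner, hξ, inner_zero_left]
  simp only [expect_norm_sq_sum_eq_sum_jointInclusionProb, hprob, add_mul, ite_mul, zero_mul,
    Finset.sum_add_distrib, Finset.sum_ite_eq, Finset.mem_univ, if_true, ← Finset.mul_sum,
    hcross, mul_zero, zero_add, real_inner_self_eq_norm_sq]

theorem sum_norm_sub_sq_add_card_mul {E : Type*} [NormedAddCommGroup E] [InnerProductSpace ℝ E]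
    {ι : Type*} [Fintype ι] {ζ : ι → E} {μ : E} (hμ : (Fintype.card ι : ℝ) • μ = ∑ i, ζ i) :
    ∑ i, ‖ζ i - μ‖ ^ 2 + Fintype.card ι * ‖μ‖ ^ 2 = ∑ i, ‖ζ i‖ ^ 2 := by
  have hcross : ∑ i, ⟪ζ i, μ⟫ = Fintype.card ι * ‖μ‖ ^ 2 := by
    rw [← sum_inner, ← hμ, real_inner_smul_left, real_inner_self_eq_norm_sq]
  simp only [norm_sub_sq_real, Finset.sum_add_distrib, Finset.sum_sub_distrib, ← Finset.mul_sum,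
    hcross, Finset.sum_const, Finset.card_univ, nsmul_eq_mul]
  ring

/-- The factor `α(n, b)` by which the variance of the mean of `b` samples drawn without replacement
from a population of size `n` differs from the population variance. -/
def samplingFactor (n b : ℕ) : ℝ := (n - b) / (b * (n - 1))

theorem samplingFactor_nonneg {n b : ℕ} (hn : 1 ≤ n) (hb : b ≤ n) : 0 ≤ samplingFactor n b :=
  div_nonneg (sub_nonneg.2 (by exact_mod_cast hb))
    (mul_nonneg b.cast_nonneg (sub_nonneg.2 (by exact_mod_cast hn)))

theorem expect_norm_sample_mean_sub_mean_sq (hι : 2 ≤ Fintype.card ι) (hb₀ : 0 < b)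
    (hb : b ≤ Fintype.card ι) {ζ : ι → E} {μ : E} (hμ : (Fintype.card ι : ℝ) • μ = ∑ i, ζ i) :
    𝔼 A : {A : Finset ι // A.card = b}, ‖(1 / b : ℝ) • ∑ j ∈ A.1, ζ j - μ‖ ^ 2 =
      samplingFactor (Fintype.card ι) b * ((∑ i, ‖ζ i - μ‖ ^ 2) / Fintype.card ι) := by
  have hcentered : ∑ i, (ζ i - μ) = 0 := by
    rw [Finset.sum_sub_distrib, Finset.sum_const, Finset.card_univ,
      ← Nat.cast_smul_eq_nsmul ℝ, hμ, sub_self]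
  have hb₀' : (b : ℝ) ≠ 0 := by exact_mod_cast hb₀.ne'
  have hsample (A : {A : Finset ι // A.card = b}) :
      ‖(1 / b : ℝ) • ∑ j ∈ A.1, ζ j - μ‖ ^ 2 = (1 / b) ^ 2 * ‖∑ j ∈ A.1, (ζ j - μ)‖ ^ 2 := by
    rw [Finset.sum_sub_distrib, Finset.sum_const, A.2, ← Nat.cast_smul_eq_nsmul ℝ, ← sq_abs (1 / _),
      ← Real.norm_eq_abs, ← mul_pow, ← norm_smul, smul_sub, smul_smul,
      one_div_mul_cancel hb₀', one_smul]
  simp only [hsample, ← Finset.mul_expect]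
  rw [expect_norm_sq_sum_eq_of_sum_eq_zero hι hb hcentered, samplingFactor]
  field_simp

theorem expect_norm_sample_mean_sub_mean_sq_le (hι : 2 ≤ Fintype.card ι) (hb₀ : 0 < b)
    (hb : b ≤ Fintype.card ι) {ζ : ι → E} {K : ℝ} (hζ : ∀ i, ‖ζ i‖ ^ 2 ≤ K) :
    𝔼 A : {A : Finset ι // A.card = b},
      ‖(1 / b : ℝ) • ∑ j ∈ A.1, ζ j - (1 / Fintype.card ι : ℝ) • ∑ i, ζ i‖ ^ 2 ≤
      samplingFactor (Fintype.card ι) b * K := by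
  have hcard : (0 : ℝ) < Fintype.card ι := by exact_mod_cast two_pos.trans_le hι
  set μ : E := (1 / Fintype.card ι : ℝ) • ∑ i, ζ i with hμ_def
  have hμ : (Fintype.card ι : ℝ) • μ = ∑ i, ζ i := by
    rw [hμ_def, smul_smul, mul_one_div_cancel hcard.ne', one_smul]
  have hvar : ∑ i, ‖ζ i - μ‖ ^ 2 ≤ Fintype.card ι * K :=
    calc ∑ i, ‖ζ i - μ‖ ^ 2 ≤ ∑ i, ‖ζ i‖ ^ 2 :=
          le_of_add_le_of_nonneg_left (sum_norm_sub_sq_add_card_mul hμ).le (by positivity)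
      _ ≤ Fintype.card ι * K := by
          simpa using Finset.sum_le_card_nsmul Finset.univ _ K fun i _ ↦ hζ i
  rw [expect_norm_sample_mean_sub_mean_sq hι hb₀ hb hμ]
  exact mul_le_mul_of_nonneg_left ((div_le_iff₀' hcard).2 hvar)
    (samplingFactor_nonneg (one_le_two.trans hι) hb)

end Sampling

section Estimator

variable {E : Type*} [NormedAddCommGroup E] [InnerProductSpace ℝ E] [CompleteSpace E]
  {n : ℕ} {g : Fin n → E → ℝ} {L : ℝ}

theorem hasGradientAt_avgFn (hg : ∀ i, Differentiable ℝ (g i)) (x : E) :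
    HasGradientAt (avgFn g) ((1 / n : ℝ) • ∑ i, ∇ (g i) x) x := by
  rw [hasGradientAt_iff_hasFDerivAt, map_smul, map_sum]
  exact (HasFDerivAt.fun_sum fun i _ ↦ (hg i x).hasGradientAt.hasFDerivAt).const_smul (1 / n : ℝ)

theorem norm_gradient_avgFn_sub_le (hn : n ≠ 0) (hg : ∀ i, Differentiable ℝ (g i))
    (hL : ∀ i x y, ‖∇ (g i) x - ∇ (g i) y‖ ≤ L * ‖x - y‖) (x y : E) :
    ‖∇ (avgFn g) x - ∇ (avgFn g) y‖ ≤ L * ‖x - y‖ := by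
  rw [(hasGradientAt_avgFn hg x).gradient, (hasGradientAt_avgFn hg y).gradient, ← smul_sub,
    ← Finset.sum_sub_distrib, norm_smul, Real.norm_of_nonneg (by positivity), one_div_mul_eq_div,
    div_le_iff₀' (by positivity)]
  simpa using norm_sum_le_of_le Finset.univ fun i _ ↦ hL i x y

/-- The variance-reduced estimate of `∇ (avgFn g) w` from the batch `A` and the snapshot `w₀`. -/
def vrGradient {b : ℕ} (g : Fin n → E → ℝ) (A : {A : Finset (Fin n) // A.card = b}) (w₀ w : E) :
    E :=
  (1 / b : ℝ) • ∑ j ∈ A.1, (∇ (g j) w - ∇ (g j) w₀) + ∇ (avgFn g) w₀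

theorem expect_norm_vrGradient_sub_sq_le {b : ℕ} (hn : 2 ≤ n) (hb₀ : 0 < b) (hb : b ≤ n)
    (hg : ∀ i, Differentiable ℝ (g i)) (hL : ∀ i x y, ‖∇ (g i) x - ∇ (g i) y‖ ≤ L * ‖x - y‖)
    (w₀ w : E) :
    𝔼 A : {A : Finset (Fin n) // A.card = b}, ‖vrGradient g A w₀ w - ∇ (avgFn g) w‖ ^ 2 ≤
      samplingFactor n b * L ^ 2 * ‖w - w₀‖ ^ 2 := by
  have herror (A : {A : Finset (Fin n) // A.card = b}) :
      vrGradient g A w₀ w - ∇ (avgFn g) w =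
        (1 / b : ℝ) • ∑ j ∈ A.1, (∇ (g j) w - ∇ (g j) w₀) -
          (1 / n : ℝ) • ∑ i, (∇ (g i) w - ∇ (g i) w₀) := by
    rw [vrGradient, (hasGradientAt_avgFn hg w).gradient, (hasGradientAt_avgFn hg w₀).gradient,
      Finset.sum_sub_distrib (s := Finset.univ), smul_sub (1 / n : ℝ)]
    abel
  have hlip (i : Fin n) : ‖∇ (g i) w - ∇ (g i) w₀‖ ^ 2 ≤ (L * ‖w - w₀‖) ^ 2 := by
    gcongr
    exact hL i w w₀
  simpa only [herror, Fintype.card_fin, mul_pow, mul_assoc] using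
    expect_norm_sample_mean_sub_mean_sq_le (by simpa using hn) hb₀ (by simpa using hb) hlip

end Estimator

section Epoch

theorem sum_range_mul_sum_range_le {d : ℕ → ℝ} (hd : ∀ t, 0 ≤ d t) (m : ℕ) :
    ∑ t ∈ Finset.range m, t * ∑ i ∈ Finset.range t, d i ≤
      m * (m - 1) / 2 * ∑ t ∈ Finset.range m, d t := by
  induction m with
  | zero => simp
  | succ m ih =>
    have hnonneg : 0 ≤ m * (m + 1) / 2 * d m := mul_nonneg (by positivity) (hd m)
    rw [Finset.sum_range_succ, Finset.sum_range_succ, Nat.cast_succ]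
    linear_combination ih + hnonneg

theorem mul_sum_range_le_sub_of_le_sub {p q : ℕ → ℝ} {c : ℝ} {m : ℕ}
    (h : ∀ t < m, p (t + 1) ≤ p t - c * q t) :
    c * ∑ t ∈ Finset.range m, q t ≤ p 0 - p m := by
  rw [Finset.mul_sum, ← Finset.sum_range_sub' p]
  exact Finset.sum_le_sum fun t ht ↦ le_sub_comm.1 (h t (Finset.mem_range.1 ht))

theorem mul_sum_range_le_sub_of_error_le {p q d r : ℕ → ℝ} {a c e : ℝ} {m : ℕ} (he : 0 ≤ e)
    (hea : e * (m * (m - 1) / 2) ≤ a) (hd : ∀ t, 0 ≤ d t)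
    (hp : ∀ t < m, p (t + 1) ≤ p t - c * q t - a * d t + e * r t)
    (hr : ∀ t, r t ≤ t * ∑ i ∈ Finset.range t, d i) :
    c * ∑ t ∈ Finset.range m, q t ≤ p 0 - p m := by
  have herror : e * ∑ t ∈ Finset.range m, r t ≤ a * ∑ t ∈ Finset.range m, d t :=
    calc e * ∑ t ∈ Finset.range m, r t
      _ ≤ e * (m * (m - 1) / 2 * ∑ t ∈ Finset.range m, d t) := by
        gcongr
        exact (Finset.sum_le_sum fun t _ ↦ hr t).trans (sum_range_mul_sum_range_le hd m)
      _ ≤ a * ∑ t ∈ Finset.range m, d t := by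
        rw [← mul_assoc]
        exact mul_le_mul_of_nonneg_right hea (Finset.sum_nonneg fun t _ ↦ hd t)
  have htelescope := mul_sum_range_le_sub_of_le_sub (p := p) (c := 1)
    (q := fun t ↦ c * q t + a * d t - e * r t) fun t ht ↦ by linarith only [hp t ht]
  simp only [one_mul, Finset.sum_add_distrib, Finset.sum_sub_distrib, ← Finset.mul_sum]
    at htelescope
  linarith only [htelescope, herror]

theorem norm_sub_zero_sq_le_mul_sum_norm_sub_sq {E : Type*} [SeminormedAddCommGroup E]
    (x : ℕ → E) (t : ℕ) :
    ‖x t - x 0‖ ^ 2 ≤ t * ∑ i ∈ Finset.range t, ‖x (i + 1) - x i‖ ^ 2 := by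
  rw [← Finset.sum_range_sub]
  calc ‖∑ i ∈ Finset.range t, (x (i + 1) - x i)‖ ^ 2
    _ ≤ (∑ i ∈ Finset.range t, ‖x (i + 1) - x i‖) ^ 2 := by gcongr; exact norm_sum_le _ _
    _ ≤ t * ∑ i ∈ Finset.range t, ‖x (i + 1) - x i‖ ^ 2 := by
      simpa using sq_sum_le_card_mul_sum_sq (s := Finset.range t)

end Epoch

section Run

variable {E : Type*} [NormedAddCommGroup E] [InnerProductSpace ℝ E] [CompleteSpace E]
  {n m S b : ℕ} {g : Fin n → E → ℝ} {γ : E → ℝ≥0∞} {L η : ℝ} {prox : E → E} {w₀ : E}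
  {W : ℕ → ℕ → BatchSpace n S m b → E}

/-- `W s t ω` are the iterates of the variance-reduced proximal gradient method started at `w₀`
when `ω (s, t)` is the batch drawn in inner iteration `t` of epoch `s`. -/
structure IsProxVRRun (g : Fin n → E → ℝ) (prox : E → E) (η : ℝ) (w₀ : E)
    (W : ℕ → ℕ → BatchSpace n S m b → E) : Prop where
  start (ω : BatchSpace n S m b) : W 0 0 ω = w₀
  restart (s : ℕ) (ω : BatchSpace n S m b) : W (s + 1) 0 ω = W s m ω
  step (s : Fin S) (t : Fin m) (ω : BatchSpace n S m b) :
    W s (t + 1) ω = prox (W s t ω - η • vrGradient g (ω (s, t)) (W s 0 ω) (W s t ω))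

namespace IsProxVRRun

theorem ne_top_succ (hW : IsProxVRRun g prox η w₀ W) (hη : 0 < η)
    (hprox : ∀ x, IsProxPt γ η x (prox x)) (hw₀ : γ w₀ ≠ ⊤) (s : Fin S) (t : Fin m)
    (ω : BatchSpace n S m b) : γ (W s (t + 1) ω) ≠ ⊤ := by
  rw [hW.step]
  exact (hprox _).ne_top hη hw₀

theorem ne_top_zero (hW : IsProxVRRun g prox η w₀ W) (hη : 0 < η)
    (hprox : ∀ x, IsProxPt γ η x (prox x)) (hw₀ : γ w₀ ≠ ⊤) {s : ℕ} (hs : s ≤ S)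
    (ω : BatchSpace n S m b) : γ (W s 0 ω) ≠ ⊤ := by
  induction s with
  | zero => rwa [hW.start]
  | succ s ih =>
    rw [hW.restart]
    rcases m with _ | m
    · exact ih (by omega)
    · exact hW.ne_top_succ hη hprox hw₀ ⟨s, hs⟩ (Fin.last m) ω

theorem ne_top (hW : IsProxVRRun g prox η w₀ W) (hη : 0 < η)
    (hprox : ∀ x, IsProxPt γ η x (prox x)) (hw₀ : γ w₀ ≠ ⊤) (s : Fin S) (t : Fin m)
    (ω : BatchSpace n S m b) : γ (W s t ω) ≠ ⊤ := by
  obtain ⟨_ | t, ht⟩ := t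
  · exact hW.ne_top_zero hη hprox hw₀ s.2.le ω
  · exact hW.ne_top_succ hη hprox hw₀ s ⟨t, by omega⟩ ω

theorem congr_of_batches_eq (hW : IsProxVRRun g prox η w₀ W) (s : Fin S)
    {ω ω' : BatchSpace n S m b} (h₀ : W s 0 ω = W s 0 ω') {t : ℕ} (ht : t ≤ m)
    (hω : ∀ i : Fin m, i < t → ω (s, i) = ω' (s, i)) : W s t ω = W s t ω' := by
  induction t with
  | zero => exact h₀
  | succ t ih =>
    have hstep := hW.step s ⟨t, ht⟩
    rw [hstep ω, hstep ω', h₀, ih (by omega) fun i hi ↦ hω i (by omega),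
      hω ⟨t, ht⟩ t.lt_succ_self]

theorem apply_zero_update (hW : IsProxVRRun g prox η w₀ W) (s : Fin S) (t : Fin m)
    (ω : BatchSpace n S m b) (A : {A : Finset (Fin n) // A.card = b}) {r : ℕ} (hr : r ≤ s) :
    W r 0 (Function.update ω (s, t) A) = W r 0 ω := by
  induction r with
  | zero => rw [hW.start, hW.start]
  | succ r ih =>
    rw [hW.restart, hW.restart]
    refine hW.congr_of_batches_eq ⟨r, by omega⟩ (ih (by omega)) le_rfl fun i _ ↦ ?_
    rw [Function.update_of_ne]
    exact fun h ↦ Nat.ne_of_lt hr (congrArg Fin.val (Prod.ext_iff.1 h).1)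

theorem apply_update (hW : IsProxVRRun g prox η w₀ W) (s : Fin S) (t : Fin m)
    (ω : BatchSpace n S m b) (A : {A : Finset (Fin n) // A.card = b}) :
    W s t (Function.update ω (s, t) A) = W s t ω :=
  hW.congr_of_batches_eq s (hW.apply_zero_update s t ω A le_rfl) t.2.le fun i hi ↦ by
    rw [Function.update_of_ne]
    exact fun h ↦ hi.ne (congrArg Fin.val (Prod.ext_iff.1 h).2)

theorem expect_norm_gradient_error_sq_le (hW : IsProxVRRun g prox η w₀ W) (hn : 2 ≤ n)
    (hb₀ : 0 < b) (hb : b ≤ n) (hg : ∀ i, Differentiable ℝ (g i))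
    (hL : ∀ i x y, ‖∇ (g i) x - ∇ (g i) y‖ ≤ L * ‖x - y‖) (s : Fin S) (t : Fin m) :
    𝔼 ω, ‖vrGradient g (ω (s, t)) (W s 0 ω) (W s t ω) - ∇ (avgFn g) (W s t ω)‖ ^ 2 ≤
      samplingFactor n b * L ^ 2 * 𝔼 ω, ‖W s t ω - W s 0 ω‖ ^ 2 := by
  rw [expect_apply_eq_expect_expect (s, t)
    (fun ω A ↦ ‖vrGradient g A (W s 0 ω) (W s t ω) - ∇ (avgFn g) (W s t ω)‖ ^ 2)
    fun ω _ ↦ by simp only [hW.apply_update, hW.apply_zero_update s t ω _ le_rfl],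
    Finset.mul_expect]
  exact Finset.expect_le_expect fun ω _ ↦ expect_norm_vrGradient_sub_sq_le hn hb₀ hb hg hL _ _

theorem expect_objective_succ_le (hW : IsProxVRRun g prox η w₀ W) (hn : 2 ≤ n) (hb₀ : 0 < b)
    (hb : b ≤ n) (hg : ∀ i, Differentiable ℝ (g i))
    (hL : ∀ i x y, ‖∇ (g i) x - ∇ (g i) y‖ ≤ L * ‖x - y‖) (hγ : ConvexFnENN γ) (hη : 0 < η)
    (hprox : ∀ x, IsProxPt γ η x (prox x)) (hw₀ : γ w₀ ≠ ⊤) (s : Fin S) (t : Fin m) :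
    𝔼 ω, objective (avgFn g) γ (W s (t + 1) ω) ≤
      𝔼 ω, objective (avgFn g) γ (W s t ω)
        - η * (1 / 2 - η * L) * 𝔼 ω, ‖gradMapping prox (∇ (avgFn g)) η (W s t ω)‖ ^ 2
        - (1 / (2 * η) - L / 2) * 𝔼 ω, ‖W s (t + 1) ω - W s t ω‖ ^ 2
        + η / 2 * (samplingFactor n b * L ^ 2) * 𝔼 ω, ‖W s t ω - W s 0 ω‖ ^ 2 := by
  have hstep := Finset.expect_le_expect (s := Finset.univ) fun (ω : BatchSpace n S m b) _ ↦
    objective_prox_step_le (fun x ↦ (hasGradientAt_avgFn hg x).differentiableAt)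
      (norm_gradient_avgFn_sub_le (by omega) hg hL) hγ hη hprox (hW.ne_top hη hprox hw₀ s t ω)
      (vrGradient g (ω (s, t)) (W s 0 ω) (W s t ω))
  simp only [← hW.step, Finset.expect_add_distrib, Finset.expect_sub_distrib,
    ← Finset.mul_expect] at hstep
  linear_combination hstep + η / 2 * hW.expect_norm_gradient_error_sq_le hn hb₀ hb hg hL s t

theorem mul_sum_norm_gradMapping_sq_epoch_le (hW : IsProxVRRun g prox η w₀ W) (hn : 2 ≤ n)
    (hb₀ : 0 < b) (hb : b ≤ n) (hg : ∀ i, Differentiable ℝ (g i))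
    (hL : ∀ i x y, ‖∇ (g i) x - ∇ (g i) y‖ ≤ L * ‖x - y‖) (hγ : ConvexFnENN γ) (hη : 0 < η)
    (hcond : m * (m - 1) / 2 * samplingFactor n b * (η * L) ^ 2 ≤ 1 - η * L)
    (hprox : ∀ x, IsProxPt γ η x (prox x)) (hw₀ : γ w₀ ≠ ⊤) (s : Fin S) :
    η * (1 / 2 - η * L) * ∑ t ∈ Finset.range m,
        𝔼 ω, ‖gradMapping prox (∇ (avgFn g)) η (W s t ω)‖ ^ 2 ≤
      𝔼 ω, objective (avgFn g) γ (W s 0 ω) - 𝔼 ω, objective (avgFn g) γ (W (s + 1) 0 ω) := by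
  have he : 0 ≤ η / 2 * (samplingFactor n b * L ^ 2) :=
    mul_nonneg (half_pos hη).le (mul_nonneg (samplingFactor_nonneg (by omega) hb) (sq_nonneg L))
  have hea : η / 2 * (samplingFactor n b * L ^ 2) * (m * (m - 1) / 2) ≤ 1 / (2 * η) - L / 2 := by
    rw [← sub_nonneg] at hcond ⊢
    refine (div_nonneg hcond (mul_nonneg zero_le_two hη.le)).trans_eq ?_
    field_simp
  simp only [hW.restart]
  refine mul_sum_range_le_sub_of_error_le he hea
    (p := fun t ↦ 𝔼 ω, objective (avgFn g) γ (W s t ω))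
    (d := fun t ↦ 𝔼 ω, ‖W s (t + 1) ω - W s t ω‖ ^ 2)
    (r := fun t ↦ 𝔼 ω, ‖W s t ω - W s 0 ω‖ ^ 2)
    (fun t ↦ Finset.expect_nonneg fun _ _ ↦ sq_nonneg _)
    (fun t ht ↦ hW.expect_objective_succ_le hn hb₀ hb hg hL hγ hη hprox hw₀ s ⟨t, ht⟩) fun t ↦ ?_
  rw [← Finset.expect_sum_comm, Finset.mul_expect]
  exact Finset.expect_le_expect fun ω _ ↦ norm_sub_zero_sq_le_mul_sum_norm_sub_sq (W s · ω) t

theorem mul_sum_norm_gradMapping_sq_le (hW : IsProxVRRun g prox η w₀ W) (hn : 2 ≤ n) (hb₀ : 0 < b)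
    (hb : b ≤ n) (hg : ∀ i, Differentiable ℝ (g i))
    (hL : ∀ i x y, ‖∇ (g i) x - ∇ (g i) y‖ ≤ L * ‖x - y‖) (hγ : ConvexFnENN γ) (hη : 0 < η)
    (hcond : m * (m - 1) / 2 * samplingFactor n b * (η * L) ^ 2 ≤ 1 - η * L)
    (hprox : ∀ x, IsProxPt γ η x (prox x)) (hw₀ : γ w₀ ≠ ⊤) {c : ℝ}
    (hc : ∀ x, (c : EReal) ≤ (avgFn g x : EReal) + (γ x : EReal)) :
    η * (1 / 2 - η * L) * ∑ s : Fin S, ∑ t : Fin m,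
        𝔼 ω, ‖gradMapping prox (∇ (avgFn g)) η (W s t ω)‖ ^ 2 ≤
      objective (avgFn g) γ w₀ - c := by
  have := nonempty_subtype_card_eq (ι := Fin n) (b := b) (by simpa using hb)
  have htelescope := mul_sum_range_le_sub_of_le_sub (m := S)
    (p := fun s ↦ 𝔼 ω, objective (avgFn g) γ (W s 0 ω))
    (q := fun s ↦ ∑ t ∈ Finset.range m, 𝔼 ω, ‖gradMapping prox (∇ (avgFn g)) η (W s t ω)‖ ^ 2)
    fun s hs ↦ le_sub_comm.1 <| hW.mul_sum_norm_gradMapping_sq_epoch_le hn hb₀ hb hg hL hγ hη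
      hcond hprox hw₀ ⟨s, hs⟩
  have hlast : c ≤ 𝔼 ω, objective (avgFn g) γ (W S 0 ω) :=
    Finset.le_expect Finset.univ_nonempty fun ω _ ↦
      le_objective_of_coe_le (hW.ne_top_zero hη hprox hw₀ le_rfl ω) (hc _)
  simp only [hW.start, Fintype.expect_const, Finset.sum_range] at htelescope
  exact htelescope.trans (sub_le_sub_left hlast _)

end IsProxVRRun

theorem smf_vr_epsilon_stationary_general (hn : 2 ≤ n) (hm : 1 ≤ m) (hS : 1 ≤ S) (hb₀ : 1 ≤ b)
    (hb : b ≤ n) (hη : 0 < η) (hηL : η * L < 1 / 2)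
    (hcond : m * (m - 1) / 2 * samplingFactor n b * (η * L) ^ 2 ≤ 1 - η * L)
    (hg : ∀ i, Differentiable ℝ (g i))
    (hL : ∀ i x y, ‖∇ (g i) x - ∇ (g i) y‖ ≤ L * ‖x - y‖) (hγ : ConvexFnENN γ) {c : ℝ}
    (hc : ∀ x, (c : EReal) ≤ (avgFn g x : EReal) + (γ x : EReal))
    (hprox : ∀ x, IsProxPt γ η x (prox x)) (hw₀ : γ w₀ ≠ ⊤) (hW : IsProxVRRun g prox η w₀ W)
    {ε : ℝ} (hε : 0 < ε)
    (hiter : (objective (avgFn g) γ w₀ - c) / (η * (1 / 2 - η * L) * ε) ≤ (m * S : ℝ)) :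
    (1 / (m * S) : ℝ) * ∑ s : Fin S, ∑ t : Fin m,
      𝔼 ω, ‖gradMapping prox (∇ (avgFn g)) η (W s t ω)‖ ^ 2 ≤ ε := by
  have hrate : 0 < η * (1 / 2 - η * L) := mul_pos hη (sub_pos.2 hηL)
  have htotal := hW.mul_sum_norm_gradMapping_sq_le hn hb₀ hb hg hL hγ hη hcond hprox hw₀ hc
  rw [div_le_iff₀ (by positivity)] at hiter
  rw [one_div_mul_eq_div, div_le_iff₀ (by positivity)]
  refine le_of_mul_le_mul_left ?_ hrate
  linarith only [htotal, hiter]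

end Run

theorem stepSize_conditions {α θ L η : ℝ} {m : ℕ} (hα : 0 ≤ α) (hθ : 2 < θ) (hL : 0 < L)
    (hη : η = 1 / (θ * L)) (hcond : 2 * m * (m + 1) * α ≤ θ * (θ - 1)) :
    0 < η ∧ η * L < 1 / 2 ∧ m * (m - 1) / 2 * α * (η * L) ^ 2 ≤ 1 - η * L := by
  have hη₀ : 0 < η := hη ▸ one_div_pos.2 (mul_pos (two_pos.trans hθ) hL)
  have hηL : η * L = 1 / θ := by rw [hη]; field_simp
  have hα' : m * (m - 1) / 2 * α ≤ 2 * m * (m + 1) * α := by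
    gcongr ?_ * α
    nlinarith only [m.cast_nonneg (α := ℝ)]
  refine ⟨hη₀, hηL ▸ one_div_lt_one_div_of_lt two_pos hθ, ?_⟩
  calc m * (m - 1) / 2 * α * (η * L) ^ 2 ≤ θ * (θ - 1) * (1 / θ) ^ 2 := by
        rw [hηL]; exact mul_le_mul_of_nonneg_right (hα'.trans hcond) (sq_nonneg _)
    _ = 1 - η * L := by rw [hηL]; field_simp

end

/-- Iteration complexity for ε-stationarity, Corollary 1. Under the
hypotheses of the main convergence theorem, if the total number of inner iterations
satisfies `mS ≥ (f′(W^{0,0}) − f*)/(η(1/2 − ηL)ε)`, then the uniformly-randomly chosen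
output is an ε-stationary point in expectation: `E‖Γ_{f′,η}(W_final)‖² ≤ ε`. -/
theorem smf_vr_epsilon_stationary {d k n : ℕ} (hn : 2 ≤ n)
    (m S b : ℕ) (hm : 1 ≤ m) (hS : 1 ≤ S) (hb : 1 ≤ b) (hbn : b ≤ n)
    (θ L η : ℝ) (hθ : 2 < θ) (hL : 0 < L) (hη : η = 1 / (θ * L))
    (hcond : 2 * m * (m + 1) * ((n - b) / (b * (n - 1)) : ℝ) ≤ θ * (θ - 1))
    (g : Fin n → Mat d k → ℝ)
    (hgdiff : ∀ i, Differentiable ℝ (g i))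
    (hglip : ∀ i, ∀ x y : Mat d k, ‖gradient (g i) x - gradient (g i) y‖ ≤ L * ‖x - y‖)
    (ψ' : Mat d k → ℝ≥0∞) (hψconv : ConvexFnENN ψ') (hψproper : ∃ x, ψ' x ≠ ⊤)
    (hψclosed : LowerSemicontinuous ψ')
    -- `f* = min f′` is attained and finite
    (fstar : ℝ)
    (hfstar : ∃ xm : Mat d k,
        ((avgFn g xm : ℝ) : EReal) + (ψ' xm : EReal) = ((fstar : ℝ) : EReal) ∧
        ∀ x : Mat d k, ((fstar : ℝ) : EReal) ≤ ((avgFn g x : ℝ) : EReal) + (ψ' x : EReal))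
    -- the proximal map of `ηψ′`
    (prox : Mat d k → Mat d k) (hprox : ∀ x, IsProxPt ψ' η x (prox x))
    -- the deterministic initial dictionary, in the domain of `ψ′`
    (W00 : Mat d k) (hW00 : ψ' W00 ≠ ⊤)
    -- the random iterates
    (W : ℕ → ℕ → BatchSpace n S m b → Mat d k)
    (hinit : ∀ ω, W 0 0 ω = W00)
    (houter : ∀ (s : ℕ) (ω : BatchSpace n S m b), W (s + 1) 0 ω = W s m ω)
    (hinner : ∀ (s : Fin S) (t : Fin m) (ω : BatchSpace n S m b),
      W s ((t : ℕ) + 1) ω = prox (W s t ω - η •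
        ((1 / b : ℝ) • ∑ j ∈ (ω (s, t)).1,
            (gradient (g j) (W s t ω) - gradient (g j) (W s 0 ω))
          + gradient (avgFn g) (W s 0 ω))))
    (ε : ℝ) (hε : 0 < ε)
    (hiter : (avgFn g W00 + (ψ' W00).toReal - fstar) / (η * (1 / 2 - η * L) * ε)
        ≤ (m * S : ℝ)) :
    (1 / (m * S) : ℝ) * ∑ s : Fin S, ∑ t : Fin m,
        ((∑ ω : BatchSpace n S m b,
            ‖gradMapping prox (gradient (avgFn g)) η (W s t ω)‖ ^ 2)
          / (Fintype.card (BatchSpace n S m b) : ℝ))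
      ≤ ε := by
  obtain ⟨hη₀, hηL, hbatch⟩ := stepSize_conditions
    (samplingFactor_nonneg (one_le_two.trans hn) hbn) hθ hL hη hcond
  simpa only [Fintype.expect_eq_sum_div_card] using
    smf_vr_epsilon_stationary_general hn hm hS hb hbn hη₀ hηL hbatch hgdiff hglip hψconv
      hfstar.choose_spec.2 hprox hW00 ⟨hinit, houter, hinner⟩ hε hiter
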